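/- For every firm f the set {w ∈ W : (w,f) ∈ S*} is nonempty, and there is a stable matching μ_F of the matching problem such that for every firm f, μ_F⁻¹(f) is the ≻_f-greatest worker in {w ∈ W : (w,f) ∈ S*}. -/

import Mathlib

/-- `(w,f)` blocks the matching `μ`: `f ≻_w μ(w)` and `w ≻_f μ⁻¹(f)`.
`prefW w f f'` means worker `w` strictly prefers firm `f` to firm `f'`;
`prefF f w w'` means firm `f` strictly prefers worker `w` to worker `w'`. -/
def Blocks {W F : Type*} (prefW : W → F → F → Prop) (prefF : F → W → W → Prop)
    (μ : W ≃ F) (w : W) (f : F) : Prop :=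
  prefW w f (μ w) ∧ prefF f w (μ.symm f)

/-- A matching is stable if no pair blocks it. -/
def IsStableMatching {W F : Type*} (prefW : W → F → F → Prop)
    (prefF : F → W → W → Prop) (μ : W ≃ F) : Prop :=
  ∀ w f, ¬ Blocks prefW prefF μ w f

/-- A pair `(w,f)` is unattractive in `S`. -/
def Unattractive {W F : Type*} (prefW : W → F → F → Prop) (prefF : F → W → W → Prop)
    (S : Set (W × F)) (w : W) (f : F) : Prop :=
  (∃ f', (w, f') ∈ S ∧ prefW w f' f ∧
      ∀ w', w' ≠ w → (w', f') ∈ S → prefF f' w w') ∨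
  (∃ w', (w', f) ∈ S ∧ prefF f w' w ∧
      ∀ f'', f'' ≠ f → (w', f'') ∈ S → prefW w' f f'')

/-- `delta S` is `S` with all pairs unattractive in `S` removed. -/
def delta {W F : Type*} (prefW : W → F → F → Prop) (prefF : F → W → W → Prop)
    (S : Set (W × F)) : Set (W × F) :=
  {p ∈ S | ¬ Unattractive prefW prefF S p.1 p.2}

/-- The normal form: the fixed point of `delta` reached by iterating from `W × F`.
Since `delta S ⊆ S` and `W × F` is finite, `Fintype.card (W × F)` iterations suffice. -/
def NormalForm (W F : Type*) [Fintype W] [Fintype F]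
    (prefW : W → F → F → Prop) (prefF : F → W → W → Prop) : Set (W × F) :=
  (delta prefW prefF)^[Fintype.card (W × F)] Set.univ

/-- `μ` is `S`-stable: `S`-admissible and no pair of `S` blocks it within `S`. -/
def SStable {W F : Type*} (prefW : W → F → F → Prop) (prefF : F → W → W → Prop)
    (S : Set (W × F)) (μ : W ≃ F) : Prop :=
  (∀ w, (w, μ w) ∈ S) ∧
  ∀ w f, (w, f) ∈ S → ¬ (prefW w f (μ w) ∧ prefF f w (μ.symm f))

/-- Arcs of the matching digraph `D(S)`: from `(w,f)` to `(w,f')` whenever `f' ≻_w f`,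
and from `(w,f)` to `(w',f)` whenever `w' ≻_f w`. -/
def Arc {W F : Type*} (prefW : W → F → F → Prop) (prefF : F → W → W → Prop)
    (S : Set (W × F)) (p q : W × F) : Prop :=
  p ∈ S ∧ q ∈ S ∧
    ((p.1 = q.1 ∧ prefW p.1 q.2 p.2) ∨ (p.2 = q.2 ∧ prefF p.2 q.1 p.1))

/-- `D(S)` contains a directed cycle: distinct vertices `c 0, …, c (n-1)` with `n ≥ 1`,
`c n = c 0`, and an arc from each vertex to the next. -/
def HasDirectedCycle {W F : Type*} (prefW : W → F → F → Prop)
    (prefF : F → W → W → Prop) (S : Set (W × F)) : Prop :=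
  ∃ (n : ℕ) (c : Fin (n + 1) → W × F), 0 < n ∧
    Function.Injective (fun i : Fin n => c i.castSucc) ∧
    c (Fin.last n) = c 0 ∧
    ∀ i : Fin n, Arc prefW prefF S (c i.castSucc) (c i.succ)

/-- The preference lists possess a cycle: there are `k ≥ 2`, distinct workers
`w_1, …, w_k` and distinct firms `f_1, …, f_k` (indexed by `ZMod k`) with
`f_{j+1} ≻_{w_j} f_j` and `w_j ≻_{f_j} w_{j-1}` for all `j`, indices modulo `k`. -/
def PrefCycle {W F : Type*} (prefW : W → F → F → Prop)
    (prefF : F → W → W → Prop) : Prop :=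
  ∃ k : ℕ, 2 ≤ k ∧ ∃ (ws : ZMod k → W) (fs : ZMod k → F),
    Function.Injective ws ∧ Function.Injective fs ∧
    ∀ j : ZMod k, prefW (ws j) (fs (j + 1)) (fs j) ∧ prefF (fs j) (ws j) (ws (j - 1))

/-!
Call `S` self-consistent when the pairs outside `S` are exactly those unattractive in `S`. A firm
with no worker left in a self-consistent `S` would make every worker the favorite of some other
firm, which is impossible by counting. A worker who is the favorite of `f` in `S` likes `f` least
among the firms she is still paired with, so distinct firms have distinct favorites and these form
a matching. A pair `(w, f)` blocking it lies outside `S`, hence is unattractive: either `f` still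
has a worker it likes better than `w`, hence better than its favorite, or `w` is the favorite of
a firm she likes better than `f`, hence better than her match. Both are impossible.

The normal form is self-consistent because unattractiveness survives `delta`: among the firms that
witness the unattractiveness of `(w, f)`, the one that `w` prefers most still ranks `w` first
after the removal, and likewise with the two sides exchanged.
-/

section Favorite

variable {α : Type*} {r : α → α → Prop} {s t : Set α} {a b : α}

/-- `a` is the `r`-greatest element of `s`, for a strict preference `r` in which `r a b` means that
`a` is preferred to `b`. Mathlib's `IsGreatest` requires an order instance, whereas here every
agent carries a preference relation of their own. -/
def IsFavorite (r : α → α → Prop) (s : Set α) (a : α) : Prop :=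
  a ∈ s ∧ ∀ b ∈ s, b ≠ a → r a b

theorem IsFavorite.mono (h : IsFavorite r s a) (hts : t ⊆ s) (ha : a ∈ t) : IsFavorite r t a :=
  ⟨ha, fun b hb => h.2 b (hts hb)⟩

theorem IsFavorite.not_rel [Std.Asymm r] (h : IsFavorite r s a) (hb : b ∈ s) : ¬ r b a := by
  intro hba
  rcases eq_or_ne b a with rfl | hne
  · exact asymm hba hba
  · exact asymm hba (h.2 b hb hne)

theorem IsFavorite.unique [Std.Asymm r] (ha : IsFavorite r s a) (hb : IsFavorite r s b) :
    a = b := by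
  by_contra hne
  exact ha.not_rel hb.1 (hb.2 a ha.1 hne)

theorem exists_isFavorite [Finite α] [IsStrictTotalOrder α r] (hs : s.Nonempty) :
    ∃ a, IsFavorite r s a := by
  obtain ⟨a, ha, hmax⟩ := (Finite.wellFounded_of_trans_of_irrefl r).has_min s hs
  exact ⟨a, ha, fun b hb hne =>
    (trichotomous_of r a b).resolve_right (not_or.2 ⟨hne.symm, hmax b hb⟩)⟩

end Favorite

theorem isFixedPt_iterate_card {α : Type*} [Fintype α] {d : Set α → Set α}
    (hd : ∀ S, d S ⊆ S) (S : Set α) : Function.IsFixedPt d (d^[Fintype.card α] S) := by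
  have hsub (k : ℕ) : d^[k + 1] S ⊆ d^[k] S := by
    rw [Function.iterate_succ_apply']
    exact hd _
  have heq {k : ℕ} (h : (d^[k] S)ᶜ.ncard = (d^[k + 1] S)ᶜ.ncard) : d^[k + 1] S = d^[k] S :=
    (compl_injective
      (Set.eq_of_subset_of_ncard_le (Set.compl_subset_compl.2 (hsub k)) h.ge)).symm
  have hstable : (d^[Fintype.card α + 1] S)ᶜ.ncard = (d^[Fintype.card α] S)ᶜ.ncard :=
    Nat.stabilises_of_monotone (f := fun k => (d^[k] S)ᶜ.ncard)
      (monotone_nat_of_le_succ fun k => Set.ncard_le_ncard (Set.compl_subset_compl.2 (hsub k)))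
      (fun k => (Set.ncard_le_card _).trans_eq Nat.card_eq_fintype_card)
      (fun k h => by
        simp only [Function.iterate_succ_apply' d (k + 1), heq h,
          ← Function.iterate_succ_apply' d k])
      (Nat.le_succ _)
  rw [Function.IsFixedPt, ← Function.iterate_succ_apply' d]
  exact heq hstable.symm

section Delta

variable {W F : Type*} {prefW : W → F → F → Prop} {prefF : F → W → W → Prop}
  {S : Set (W × F)} {w : W} {f : F}

theorem delta_subset : delta prefW prefF S ⊆ S :=
  fun _ hp => hp.1

theorem unattractive_iff_isFavorite :
    Unattractive prefW prefF S w f ↔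
      (∃ g, prefW w g f ∧ IsFavorite (prefF g) {v | (v, g) ∈ S} w) ∨
      (∃ v, prefF f v w ∧ IsFavorite (prefW v) {g | (v, g) ∈ S} f) := by
  grind [Unattractive, IsFavorite]

theorem unattractive_preimage_swap :
    Unattractive prefF prefW (Prod.swap ⁻¹' S) f w ↔ Unattractive prefW prefF S w f :=
  or_comm

theorem delta_preimage_swap :
    delta prefF prefW (Prod.swap ⁻¹' S) = Prod.swap ⁻¹' delta prefW prefF S :=
  Set.ext fun _ => and_congr_right fun _ => unattractive_preimage_swap.not

theorem exists_rel_isFavorite_delta [Finite F] [∀ w, IsStrictOrder F (prefW w)]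
    [∀ f, Std.Asymm (prefF f)]
    (h : ∃ g, prefW w g f ∧ IsFavorite (prefF g) {v | (v, g) ∈ S} w) :
    ∃ g, prefW w g f ∧ IsFavorite (prefF g) {v | (v, g) ∈ delta prefW prefF S} w := by
  obtain ⟨g, ⟨hgf, hfav⟩, hmax⟩ :=
    (Finite.wellFounded_of_trans_of_irrefl (prefW w)).has_min _ h
  refine ⟨g, hgf, hfav.mono (fun _ hv => delta_subset hv) ⟨hfav.1, fun hun => ?_⟩⟩
  rcases unattractive_iff_isFavorite.1 hun with ⟨g', hg'g, hfav'⟩ | ⟨v, hvw, hfav'⟩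
  · exact hmax g' ⟨_root_.trans hg'g hgf, hfav'⟩ hg'g
  · exact hfav.not_rel hfav'.1 hvw

theorem Unattractive.unattractive_delta [Finite W] [Finite F] [∀ w, IsStrictOrder F (prefW w)]
    [∀ f, IsStrictOrder W (prefF f)] (h : Unattractive prefW prefF S w f) :
    Unattractive prefW prefF (delta prefW prefF S) w f := by
  rcases unattractive_iff_isFavorite.1 h with hw | hf
  · exact unattractive_iff_isFavorite.2 (.inl (exists_rel_isFavorite_delta hw))
  · have hf' := exists_rel_isFavorite_delta (S := Prod.swap ⁻¹' S) hf
    rw [delta_preimage_swap] at hf'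
    exact unattractive_iff_isFavorite.2 (.inr hf')

theorem unattractive_iterate_delta_of_notMem [Finite W] [Finite F]
    [∀ w, IsStrictOrder F (prefW w)] [∀ f, IsStrictOrder W (prefF f)] {k : ℕ}
    (h : (w, f) ∉ (delta prefW prefF)^[k] Set.univ) :
    Unattractive prefW prefF ((delta prefW prefF)^[k] Set.univ) w f := by
  induction k with
  | zero => exact absurd (Set.mem_univ _) h
  | succ k ih =>
    rw [Function.iterate_succ_apply'] at h ⊢
    apply Unattractive.unattractive_delta
    by_contra hun
    exact h ⟨by_contra fun hmem => hun (ih hmem), hun⟩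

end Delta

/-- `S` consists exactly of the pairs that are not unattractive in `S`. This is stronger than
`delta S = S`, which allows pairs outside `S` that are not unattractive in `S`. -/
def IsSelfConsistent {W F : Type*} (prefW : W → F → F → Prop) (prefF : F → W → W → Prop)
    (S : Set (W × F)) : Prop :=
  ∀ w f, (w, f) ∈ S ↔ ¬ Unattractive prefW prefF S w f

theorem isSelfConsistent_normalForm {W F : Type*} [Fintype W] [Fintype F]
    (prefW : W → F → F → Prop) (prefF : F → W → W → Prop)
    [∀ w, IsStrictOrder F (prefW w)] [∀ f, IsStrictOrder W (prefF f)] :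
    IsSelfConsistent prefW prefF (NormalForm W F prefW prefF) := by
  refine fun w f => ⟨fun hmem => ?_, fun hun => ?_⟩
  · have hfix : delta prefW prefF (NormalForm W F prefW prefF) = NormalForm W F prefW prefF :=
      isFixedPt_iterate_card (fun _ => delta_subset) _
    exact (hfix.ge hmem).2
  · exact by_contra fun hmem => hun (unattractive_iterate_delta_of_notMem hmem)

namespace IsSelfConsistent

variable {W F : Type*} {prefW : W → F → F → Prop} {prefF : F → W → W → Prop}
  {S : Set (W × F)}

theorem unattractive_of_notMem (hS : IsSelfConsistent prefW prefF S) {w : W} {f : F}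
    (h : (w, f) ∉ S) : Unattractive prefW prefF S w f :=
  not_not.1 fun hun => h ((hS w f).2 hun)

theorem not_rel_of_isFavorite (hS : IsSelfConsistent prefW prefF S) {w : W} {f g : F}
    (hf : IsFavorite (prefF f) {v | (v, f) ∈ S} w) (hg : (w, g) ∈ S) : ¬ prefW w f g :=
  fun hfg => (hS w g).1 hg (unattractive_iff_isFavorite.2 (.inl ⟨f, hfg, hf⟩))

theorem firm_eq_of_isFavorite [∀ w, Std.Trichotomous (prefW w)]
    (hS : IsSelfConsistent prefW prefF S) {w : W} {f g : F}
    (hf : IsFavorite (prefF f) {v | (v, f) ∈ S} w)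
    (hg : IsFavorite (prefF g) {v | (v, g) ∈ S} w) : f = g :=
  Std.Trichotomous.trichotomous (r := prefW w) f g (hS.not_rel_of_isFavorite hf hg.1)
    (hS.not_rel_of_isFavorite hg hf.1)

theorem exists_mem [Finite W] [Finite F] [∀ f, Std.Asymm (prefF f)]
    (hS : IsSelfConsistent prefW prefF S) (hcard : Nat.card F ≤ Nat.card W) (f : F) :
    ∃ w, (w, f) ∈ S := by
  by_contra! hf
  have hfav (w : W) : ∃ g, IsFavorite (prefF g) {v | (v, g) ∈ S} w := by
    rcases unattractive_iff_isFavorite.1 (hS.unattractive_of_notMem (hf w)) with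
      ⟨g, -, hg⟩ | ⟨v, -, hv⟩
    · exact ⟨g, hg⟩
    · exact absurd hv.1 (hf v)
  choose g hg using hfav
  have hinj : Function.Injective g := fun v w h => (hg v).unique (h ▸ hg w)
  obtain ⟨w, rfl⟩ := (hinj.bijective_of_nat_card_le hcard).surjective f
  exact hf w (hg w).1

theorem exists_equiv_isFavorite [Finite W] [Finite F] [∀ w, Std.Trichotomous (prefW w)]
    [∀ f, IsStrictTotalOrder W (prefF f)] (hS : IsSelfConsistent prefW prefF S)
    (hcard : Nat.card W = Nat.card F) :
    ∃ μ : W ≃ F, ∀ f, IsFavorite (prefF f) {w | (w, f) ∈ S} (μ.symm f) := by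
  choose t ht using fun f => exists_isFavorite (r := prefF f) (hS.exists_mem hcard.ge f)
  have hinj : Function.Injective t := fun f g h => hS.firm_eq_of_isFavorite (ht f) (h ▸ ht g)
  exact ⟨(Equiv.ofBijective t (hinj.bijective_of_nat_card_le hcard.le)).symm, ht⟩

theorem isStableMatching [∀ w, IsTrans F (prefW w)] [∀ f, IsStrictOrder W (prefF f)]
    (hS : IsSelfConsistent prefW prefF S) {μ : W ≃ F}
    (hμ : ∀ f, IsFavorite (prefF f) {w | (w, f) ∈ S} (μ.symm f)) :
    IsStableMatching prefW prefF μ := by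
  rintro w f ⟨hwf, hfw⟩
  have hnotMem : (w, f) ∉ S := fun hmem => (hμ f).not_rel hmem hfw
  have hmatched : (w, μ w) ∈ S := by simpa using (hμ (μ w)).1
  rcases unattractive_iff_isFavorite.1 (hS.unattractive_of_notMem hnotMem) with
    ⟨g, hgf, hg⟩ | ⟨v, hvw, hv⟩
  · exact hS.not_rel_of_isFavorite hg hmatched (_root_.trans hgf hwf)
  · exact (hμ f).not_rel hv.1 (_root_.trans hvw hfw)

end IsSelfConsistent

/-- For every firm `f` the set `{w | (w,f) ∈ S*}` is nonempty, and there is a stable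
matching assigning to each firm its `≻_f`-greatest worker in that set. -/
theorem firm_optimal_stable {W F : Type*} [Fintype W] [Fintype F] [Nonempty W]
    (hcard : Fintype.card W = Fintype.card F)
    (prefW : W → F → F → Prop) (prefF : F → W → W → Prop)
    (hW : ∀ w, IsStrictTotalOrder F (prefW w))
    (hF : ∀ f, IsStrictTotalOrder W (prefF f)) :
    (∀ f : F, ∃ w : W, (w, f) ∈ NormalForm W F prefW prefF) ∧
    ∃ μ : W ≃ F, IsStableMatching prefW prefF μ ∧
      ∀ f : F, (μ.symm f, f) ∈ NormalForm W F prefW prefF ∧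
        ∀ w, (w, f) ∈ NormalForm W F prefW prefF → w ≠ μ.symm f → prefF f (μ.symm f) w := by
  have hS := isSelfConsistent_normalForm prefW prefF
  have hcard' : Nat.card W = Nat.card F := by
    simpa only [Nat.card_eq_fintype_card] using hcard
  obtain ⟨μ, hμ⟩ := hS.exists_equiv_isFavorite hcard'
  exact ⟨hS.exists_mem hcard'.ge, μ, hS.isStableMatching hμ, hμ⟩
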